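/- Let p ≥ 2 and n ≥ 1. Define U_p : ℝⁿ×ℝⁿ → ℝ by U_p(x,y) = p(1−1/p)^{p−1}·(|y| − (p−1)|x|)·(|x|+|y|)^{p−1} if |y| ≥ (p−1)|x|, and U_p(x,y) = |y|^p − (p−1)^p|x|^p if |y| < (p−1)|x|. Then for all x, y ∈ ℝⁿ one has the pointwise majorization |y|^p − (p−1)^p|x|^p ≤ U_p(x,y). -/

import Mathlib

/-!
Write `c = p - 1`, `q = p / c`, `a = ‖x‖`, `b = ‖y‖`, with `c a ≤ b` (otherwise there is equality).
After scaling by `m = (a + b) / q` one has `c a = m t` and `b = m (t + r q)` for a convex weight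
`t + r = 1`, and the claim becomes `(t + r q) ^ p - t ^ p ≤ p r q`. The left side is the integral
of `p r (t + r w) ^ c` over `w ∈ [0, q]`. Since `c ≥ 1`, convexity gives
`(t + r w) ^ c ≤ t + r w ^ c`, so the integral is at most `p r t q + r ^ 2 q ^ p`
(`rpow_convexComb_sub_le`). Finally `q ^ c ≤ p` by Bernoulli's inequality (`div_sub_one_rpow_le`),
so that `q ^ p ≤ p q`, and `t + r = 1` finishes the proof.
-/

open Real

/-- The modified Burkholder special function for `p ≥ 2`. -/
noncomputable def burkholderU (p : ℝ) {n : ℕ} (x y : EuclideanSpace ℝ (Fin n)) : ℝ :=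
  if (p - 1) * ‖x‖ ≤ ‖y‖ then
    p * (1 - 1 / p) ^ (p - 1) * (‖y‖ - (p - 1) * ‖x‖) * (‖x‖ + ‖y‖) ^ (p - 1)
  else
    ‖y‖ ^ p - (p - 1) ^ p * ‖x‖ ^ p

/-- The convexity bound `(t + r w) ^ (p - 1) ≤ t + r w ^ (p - 1)`, integrated over `w ∈ [0, q]`. -/
lemma rpow_convexComb_sub_le {p t r q : ℝ} (hp : 2 ≤ p) (ht : 0 ≤ t) (hr : 0 ≤ r)
    (htr : t + r = 1) (hq : 0 ≤ q) :
    (t + r * q) ^ p - t ^ p ≤ p * r * t * q + r ^ 2 * q ^ p := by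
  have hd : ∀ w : ℝ, HasDerivAt (fun w : ℝ => p * r * t * w + r ^ 2 * w ^ p - (t + r * w) ^ p)
      (p * r * t + r ^ 2 * (p * w ^ (p - 1)) - r * p * (t + r * w) ^ (p - 1)) w := by
    intro w
    have h1 : HasDerivAt (fun w : ℝ => p * r * t * w) (p * r * t) w := by
      simpa using (hasDerivAt_id w).const_mul (p * r * t)
    have h2 : HasDerivAt (fun w : ℝ => r ^ 2 * w ^ p) (r ^ 2 * (p * w ^ (p - 1))) w :=
      (Real.hasDerivAt_rpow_const (Or.inr (by linarith))).const_mul _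
    have h3 : HasDerivAt (fun w : ℝ => t + r * w) r w := by
      simpa using ((hasDerivAt_id w).const_mul r).const_add t
    exact (h1.add h2).sub (h3.rpow_const (Or.inr (by linarith)))
  have hmono : MonotoneOn (fun w : ℝ => p * r * t * w + r ^ 2 * w ^ p - (t + r * w) ^ p)
      (Set.Ici 0) := by
    refine monotoneOn_of_deriv_nonneg (convex_Ici 0)
      (fun w _ => (hd w).continuousAt.continuousWithinAt)
      (fun w _ => (hd w).differentiableAt.differentiableWithinAt) ?_
    intro w hw
    rw [interior_Ici] at hw
    rw [(hd w).deriv]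
    have hc := (convexOn_rpow (p := p - 1) (by linarith)).2 (x := 1) (y := w)
      (Set.mem_Ici.2 zero_le_one) (Set.mem_Ici.2 (le_of_lt hw)) ht hr htr
    simp only [smul_eq_mul, mul_one, Real.one_rpow] at hc
    have hpr : 0 ≤ r * p := mul_nonneg hr (by linarith)
    nlinarith [mul_le_mul_of_nonneg_left hc hpr]
  have h := hmono (Set.mem_Ici.2 le_rfl) (Set.mem_Ici.2 hq) hq
  simp only [mul_zero, add_zero, Real.zero_rpow (show p ≠ 0 by linarith)] at h
  linarith

lemma div_sub_one_rpow_le {p : ℝ} (hp : 2 ≤ p) : (p / (p - 1)) ^ (p - 1) ≤ p := by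
  have hp0 : 0 < p := by linarith
  have hc0 : 0 < p - 1 := by linarith
  -- Bernoulli is applied to the inverse base `(p - 1) / p = 1 - 1 / p`.
  have hb := one_add_mul_self_le_rpow_one_add (s := -(1 / p)) (p := p - 1)
    (by rw [neg_le_neg_iff, div_le_one hp0]; linarith) (by linarith)
  have e1 : 1 + (p - 1) * -(1 / p) = p⁻¹ := by field_simp; ring
  have e2 : 1 + -(1 / p) = (p / (p - 1))⁻¹ := by field_simp; ring
  rw [e1, e2, Real.inv_rpow (by positivity)] at hb
  exact (inv_le_inv₀ hp0 (by positivity)).1 hb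

/-- The majorization for the norms `a = ‖x‖`, `b = ‖y‖` in the region `(p - 1) a ≤ b`. -/
lemma burkholder_scalar {p a b : ℝ} (hp : 2 ≤ p) (ha : 0 ≤ a) (hb : 0 ≤ b)
    (hab : (p - 1) * a ≤ b) :
    b ^ p - (p - 1) ^ p * a ^ p ≤
      p * (1 - 1 / p) ^ (p - 1) * (b - (p - 1) * a) * (a + b) ^ (p - 1) := by
  have hp0 : 0 < p := by linarith
  have hc0 : 0 < p - 1 := by linarith
  rcases (add_nonneg ha hb).eq_or_lt with hS | hS
  · have ha0 : a = 0 := by linarith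
    have hb0 : b = 0 := by linarith
    subst ha0 hb0
    simp [Real.zero_rpow hp0.ne']
  set t := p * a / (a + b) with ht
  set r := (b - (p - 1) * a) / (a + b) with hr
  set q := p / (p - 1) with hq
  set m := (1 - 1 / p) * (a + b) with hm
  have hq0 : 0 < q := by positivity
  have h1p : 0 < 1 - 1 / p := by
    rw [sub_pos, div_lt_one hp0]; linarith
  have hm0 : 0 < m := mul_pos h1p hS
  have ht0 : 0 ≤ t := by positivity
  have hr0 : 0 ≤ r := div_nonneg (by linarith) hS.le
  have htr : t + r = 1 := by rw [ht, hr]; field_simp; ring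
  have eb : b = m * (t + r * q) := by
    rw [hm, ht, hr, hq]; field_simp; ring
  have ea : (p - 1) * a = m * t := by
    rw [hm, ht]; field_simp
  have key : (t + r * q) ^ p - t ^ p ≤ p * r * q := by
    have h1 := rpow_convexComb_sub_le hp ht0 hr0 htr hq0.le
    have h2 : q ^ p ≤ p * q := by
      have h3 : q ^ p = q ^ (p - 1) * q := by
        rw [← Real.rpow_add_one hq0.ne', sub_add_cancel]
      rw [h3]
      exact mul_le_mul_of_nonneg_right (div_sub_one_rpow_le hp) hq0.le
    have h4 := mul_le_mul_of_nonneg_left h2 (sq_nonneg r)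
    have h5 : p * r * t * q + r ^ 2 * (p * q) = p * r * q := by
      linear_combination p * r * q * htr
    linarith
  have hmp : m ^ p = m ^ (p - 1) * m := by
    rw [← Real.rpow_add_one hm0.ne', sub_add_cancel]
  have hR : p * (1 - 1 / p) ^ (p - 1) * (b - (p - 1) * a) * (a + b) ^ (p - 1)
      = m ^ p * (p * r * q) := by
    have h6 : m ^ (p - 1) = (1 - 1 / p) ^ (p - 1) * (a + b) ^ (p - 1) :=
      Real.mul_rpow h1p.le hS.le
    have h7 : b - (p - 1) * a = m * (r * q) := by linear_combination eb - ea
    rw [h7, hmp, h6]; ring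
  have hL : b ^ p - (p - 1) ^ p * a ^ p = m ^ p * ((t + r * q) ^ p - t ^ p) := by
    rw [mul_sub, ← Real.mul_rpow hm0.le ht0, ← ea, Real.mul_rpow hc0.le ha,
      ← Real.mul_rpow hm0.le (add_nonneg ht0 (mul_nonneg hr0 hq0.le)), ← eb]
  rw [hL, hR]
  exact mul_le_mul_of_nonneg_left key (by positivity)

/-- The pointwise majorization `|y|^p − (p−1)^p|x|^p ≤ U_p(x,y)` for `p ≥ 2`. -/
theorem stmt_2 (p : ℝ) (hp : 2 ≤ p) (n : ℕ) (hn : 1 ≤ n)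
    (x y : EuclideanSpace ℝ (Fin n)) :
    ‖y‖ ^ p - (p - 1) ^ p * ‖x‖ ^ p ≤ burkholderU p x y := by
  unfold burkholderU
  split_ifs with h
  · exact burkholder_scalar hp (norm_nonneg x) (norm_nonneg y) h
  · exact le_rfl
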